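/- arXiv:2209.08186 — 2 statements merged into one kernel-verified Lean document; each statement's English description precedes it below -/
import Mathlib

section
/- Let d ≥ 2, let s be a positive integer, β > −d−s, and λ_0, …, λ_{s−1} > 0. Let Y, Y' be solid harmonics of degrees m, m' on ℝ^d, let n ≥ m and n' ≥ m', and set S = S_{m,Y}^{n,(β,−s)} and S' = S_{m',Y'}^{n',(β,−s)}. Then: (i) if n ≠ n', or if ∫_{S^{d−1}} Y Y' dσ = 0, then ⟨S, S'⟩_{β,−s} = 0; (ii) if (n,m,Y) = (n',m',Y') and (1/ω_d) ∫_{S^{d−1}} Y(ξ)² dσ(ξ) = 1, then ⟨S, S⟩_{β,−s} = 2^{2(n−m)} λ_{n−m} when 0 ≤ n−m ≤ s−1, and ⟨S, S⟩_{β,−s} = 2^{s−β−2m−d} ĥ_{n−m−s}^{(s+2m+β+d−1,0)} when n−m ≥ s. -/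
open MeasureTheory Finset

noncomputable section

/-- Pochhammer symbol `(x)_k`. -/
def poch (x : ℝ) (k : ℕ) : ℝ := (ascPochhammer ℝ k).eval x

/-- Jacobi polynomial `P_n^{(a,b)}` for real parameters. -/
def jacobiP (a b : ℝ) (n : ℕ) (t : ℝ) : ℝ :=
  (poch (a + 1) n / (n.factorial : ℝ)) *
    ∑ k ∈ Finset.range (n + 1),
      poch (-(n : ℝ)) k * poch ((n : ℝ) + a + b + 1) k /
        ((k.factorial : ℝ) * poch (a + 1) k) * ((1 - t) / 2) ^ k

/-- Normalizing constant `A_n^{(a,b)}`. -/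
def jacobiA (a b : ℝ) (n : ℕ) : ℝ := 2 ^ n / poch ((n : ℝ) + a + b + 1) n

/-- Normalized Jacobi polynomial `P̂_n^{(a,b)}`. -/
def jacobiPhat (a b : ℝ) (n : ℕ) (t : ℝ) : ℝ := jacobiA a b n * jacobiP a b n t

/-- The polynomials `J_n^{(a-s,b-s)}` (defined from the parameters `a, b > -1`). -/
def jacobiJ (a b : ℝ) (s n : ℕ) (t : ℝ) : ℝ :=
  if n < s then (1 + t) ^ n / (n.factorial : ℝ)
  else ∫ u in (-1 : ℝ)..t, (t - u) ^ (s - 1) / ((s - 1).factorial : ℝ) * jacobiPhat a b (n - s) u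

/-- Normalization constant `c_{a,b}`. -/
def cconst (a b : ℝ) : ℝ := Real.Gamma (a + b + 2) / (Real.Gamma (a + 1) * Real.Gamma (b + 1))

/-- Norm square `h_n^{(a,b)}`. -/
def hJac (a b : ℝ) (n : ℕ) : ℝ :=
  poch (a + 1) n * poch (b + 1) n * (a + b + n + 1) /
    ((n.factorial : ℝ) * poch (a + b + 2) n * (a + b + 2 * n + 1))

/-- Norm square `ĥ_n^{(a,b)}`. -/
def hHat (a b : ℝ) (n : ℕ) : ℝ := 2 ^ (a + b + 1) / cconst a b * (jacobiA a b n) ^ 2 * hJac a b n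

/-- The polynomials `J_n^{(a,-s)}`, built from `P̂^{(a+s,0)}`. -/
def jacobiJneg (a : ℝ) (s n : ℕ) (t : ℝ) : ℝ := jacobiJ (a + s) 0 s n t

/-- Euclidean space `ℝ^d`. -/
abbrev Euc (d : ℕ) : Type := EuclideanSpace ℝ (Fin d)

/-- The surface measure on the unit sphere `S^{d-1} ⊂ ℝ^d`. -/
def sphMeasure (d : ℕ) : Measure (Metric.sphere (0 : Euc d) 1) :=
  (volume : Measure (Euc d)).toSphere

/-- Surface area `ω_d` of the unit sphere. -/
def omegaS (d : ℕ) : ℝ := (sphMeasure d Set.univ).toReal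

/-- Integral over the sphere of a function defined on `ℝ^d`. -/
def sphInt (d : ℕ) (g : Euc d → ℝ) : ℝ := ∫ ξ, g (ξ : Euc d) ∂(sphMeasure d)

/-- The conic surface `V_0^{d+1} = {(x,t) : ‖x‖ = t, 0 ≤ t ≤ 1}` as a subset of `ℝ^d × ℝ`. -/
def coneSet (d : ℕ) : Set (Euc d × ℝ) := {p | ‖p.1‖ = p.2 ∧ 0 ≤ p.2 ∧ p.2 ≤ 1}

/-- The integral `∫_{V_0^{d+1}} f dm`. -/
def coneInt (d : ℕ) (f : Euc d × ℝ → ℝ) : ℝ :=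
  ∫ t in (0 : ℝ)..1, t ^ (d - 1) * sphInt d (fun ξ => f (t • ξ, t))

/-- `∂_t^k f`: the `k`-th partial derivative in the last variable `t`, with `x` fixed. -/
def pdT (k : ℕ) (f : Euc d × ℝ → ℝ) : Euc d × ℝ → ℝ :=
  fun p => iteratedDeriv k (fun τ => f (p.1, τ)) p.2

/-- A solid harmonic of degree `m` on `ℝ^d`: a homogeneous polynomial annihilated by the
Laplacian. -/
def IsSolidHarmonic (d m : ℕ) (Y : Euc d → ℝ) : Prop :=
  ∃ q : MvPolynomial (Fin d) ℝ, q.IsHomogeneous m ∧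
    (∑ i : Fin d, MvPolynomial.pderiv i (MvPolynomial.pderiv i q)) = 0 ∧
    ∀ x : Euc d, Y x = MvPolynomial.eval (fun i => x i) q

/-- The ordinary inner product `⟨f,g⟩_{β,γ}` on the conic surface. -/
def coneInner (d : ℕ) (β γ : ℝ) (f g : Euc d × ℝ → ℝ) : ℝ :=
  cconst (β + d - 1) γ / omegaS d *
    coneInt d (fun p => f p * g p * p.2 ^ β * (1 - p.2) ^ γ)

/-- The (classical) Jacobi basis polynomial `S_{m,Y}^{n,(β,γ)}` on the cone. -/
def coneS (d : ℕ) (β γ : ℝ) (n m : ℕ) (Y : Euc d → ℝ) : Euc d × ℝ → ℝ :=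
  fun p => jacobiP (2 * m + β + d - 1) γ (n - m) (1 - 2 * p.2) * Y p.1

/-- The norm square `h_{n,m}^{β,γ}`. -/
def coneH (d : ℕ) (β γ : ℝ) (n m : ℕ) : ℝ :=
  poch (β + d) (2 * m) / poch (β + γ + d + 1) (2 * m) * hJac (2 * m + β + d - 1) γ (n - m)

/-- The orthogonal projection `proj_n^{β,γ} f` built from an orthonormal spanning family of
solid harmonics. -/
def coneProj (d : ℕ) (N : ℕ → ℕ) (Y : (m : ℕ) → Fin (N m) → Euc d → ℝ) (β γ : ℝ) (n : ℕ)
    (f : Euc d × ℝ → ℝ) : Euc d × ℝ → ℝ :=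
  fun p => ∑ m ∈ Finset.range (n + 1), ∑ ℓ : Fin (N m),
    coneInner d β γ f (coneS d β γ n m (Y m ℓ)) / coneH d β γ n m * coneS d β γ n m (Y m ℓ) p

/-- The Sobolev inner product `⟨f,g⟩_{β,-s}` on the conic surface. -/
def coneSobInner (d : ℕ) (β : ℝ) (s : ℕ) (lam : ℕ → ℝ) (f g : Euc d × ℝ → ℝ) : ℝ :=
  (1 / omegaS d) * coneInt d (fun p => pdT s f p * pdT s g p * p.2 ^ (β + s)) +
    ∑ k ∈ Finset.range s, lam k / omegaS d *
      sphInt d (fun ξ => pdT k f (ξ, 1) * pdT k g (ξ, 1))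

/-- The Sobolev basis polynomial `S_{m,Y}^{n,(β,-s)}` on the cone. -/
def coneSS (d : ℕ) (β : ℝ) (s n m : ℕ) (Y : Euc d → ℝ) : Euc d × ℝ → ℝ :=
  fun p => jacobiJneg (2 * m + β + d - 1) s (n - m) (1 - 2 * p.2) * Y p.1

/-- The Sobolev norm square `h_{m,n}^{(β,-s)}`. -/
def coneSobH (d : ℕ) (β : ℝ) (s : ℕ) (lam : ℕ → ℝ) (n m : ℕ) : ℝ :=
  if n - m < s then 2 ^ (2 * (n - m)) * lam (n - m)
  else 2 ^ ((s : ℝ) - β - 2 * m - d) * hHat ((s : ℝ) + 2 * m + β + d - 1) 0 (n - m - s)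

/-- The Sobolev orthogonal projection `proj_n^{β,-s} f`. -/
def coneSobProj (d : ℕ) (N : ℕ → ℕ) (Y : (m : ℕ) → Fin (N m) → Euc d → ℝ) (β : ℝ) (s : ℕ)
    (lam : ℕ → ℝ) (n : ℕ) (f : Euc d × ℝ → ℝ) : Euc d × ℝ → ℝ :=
  fun p => ∑ m ∈ Finset.range (n + 1), ∑ ℓ : Fin (N m),
    coneSobInner d β s lam f (coneSS d β s n m (Y m ℓ)) / coneSobH d β s lam n m *
      coneSS d β s n m (Y m ℓ) p

/-- The spherical harmonic projection `Proj_k[g]` built from the orthonormal spanning family. -/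
def sphProj (d : ℕ) (N : ℕ → ℕ) (Y : (m : ℕ) → Fin (N m) → Euc d → ℝ) (k : ℕ)
    (g : Euc d → ℝ) : Euc d → ℝ :=
  fun x => ∑ ℓ : Fin (N k), (1 / omegaS d) * sphInt d (fun ξ => g ξ * Y k ℓ ξ) * Y k ℓ x

/-- Hypotheses: `(Y_ℓ^m)` is an orthonormal spanning family of solid harmonics. -/
def IsONBasisFamily (d : ℕ) (N : ℕ → ℕ) (Y : (m : ℕ) → Fin (N m) → Euc d → ℝ) : Prop :=
  (∀ m ℓ, IsSolidHarmonic d m (Y m ℓ)) ∧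
  (∀ m (ℓ ℓ' : Fin (N m)),
    (1 / omegaS d) * sphInt d (fun ξ => Y m ℓ ξ * Y m ℓ' ξ) = if ℓ = ℓ' then 1 else 0) ∧
  (∀ m (Z : Euc d → ℝ), IsSolidHarmonic d m Z →
    ∃ c : Fin (N m) → ℝ, ∀ x, Z x = ∑ ℓ : Fin (N m), c ℓ * Y m ℓ x)


lemma poch_eq_prod (x : ℝ) (k : ℕ) : poch x k = ∏ i ∈ range k, (x + i) := by
  induction k with
  | zero => simp [poch]
  | succ k ih =>
    rw [prod_range_succ, ← ih, poch, poch, ascPochhammer_succ_eval]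

lemma poch_pos {x : ℝ} (hx : 0 < x) (k : ℕ) : 0 < poch x k := by
  rw [poch_eq_prod]; exact prod_pos fun i _ => by positivity

lemma poch_neg_nat (N k : ℕ) (h : k ≤ N) :
    poch (-(N : ℝ)) k * ((N - k).factorial : ℝ) = (-1) ^ k * (N.factorial : ℝ) := by
  induction k with
  | zero => simp [poch]
  | succ k ih =>
    have ih := ih (by omega)
    have e : N - k = (N - (k + 1)) + 1 := by omega
    rw [e, Nat.factorial_succ] at ih
    have e2 : ((N - (k + 1) : ℕ) : ℝ) = N - k - 1 := by
      rw [Nat.cast_sub h]; push_cast; ring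
    push_cast [e2] at ih
    rw [poch_eq_prod] at ih ⊢
    rw [prod_range_succ, pow_succ]
    linear_combination (-1) * ih

lemma poch_add (x : ℝ) (i j : ℕ) : poch x (i + j) = poch x i * poch (x + i) j := by
  simp only [poch_eq_prod, prod_range_add]
  congr 1
  refine prod_congr rfl fun l _ => ?_
  push_cast; ring

lemma prod_erase_sub (N k : ℕ) (h : k ≤ N) :
    ∏ j ∈ (range (N + 1)).erase k, ((-(k : ℝ)) - (-(j : ℝ))) =
      (-1) ^ k * (k.factorial : ℝ) * ((N - k).factorial : ℝ) := by
  induction N, h using Nat.le_induction with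
  | base =>
    have : (range (k + 1)).erase k = range k := by
      ext i; simp; omega
    rw [this]
    have h := poch_neg_nat k k le_rfl
    rw [poch_eq_prod] at h
    simp at h
    simp [h]
  | succ N hN ih =>
    have : (range (N + 1 + 1)).erase k = insert (N + 1) ((range (N + 1)).erase k) := by
      ext i; simp; omega
    rw [this, prod_insert (by simp), ih]
    have e : N + 1 - k = (N - k) + 1 := by omega
    rw [e, Nat.factorial_succ]
    push_cast [Nat.cast_sub hN]
    ring

/-- coefficient of `t^k` in `P_N^{(a,0)}(1-2t)`. -/
def jc (a : ℝ) (N k : ℕ) : ℝ :=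
  (poch (a + 1) N / (N.factorial : ℝ)) *
    (poch (-(N : ℝ)) k * poch ((N : ℝ) + a + 0 + 1) k / ((k.factorial : ℝ) * poch (a + 1) k))

lemma jacobiP_eq (a : ℝ) (N : ℕ) (t : ℝ) :
    jacobiP a 0 N (1 - 2 * t) = ∑ k ∈ range (N + 1), jc a N k * t ^ k := by
  rw [jacobiP, mul_sum]
  refine sum_congr rfl fun k _ => ?_
  rw [jc]
  have : (1 - (1 - 2 * t)) / 2 = t := by ring
  rw [this]; ring

lemma jc_eq (a : ℝ) (ha : -1 < a) (N k : ℕ) (h : k ≤ N) :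
    jc a N k = ((-1) ^ k * (k.factorial : ℝ) * ((N - k).factorial : ℝ))⁻¹ *
      poch (a + 1 + k) N := by
  have h1 := poch_neg_nat N k h
  have h2 : poch (a + 1) N * poch (a + 1 + N) k = poch (a + 1) k * poch (a + 1 + k) N := by
    rw [← poch_add, ← poch_add, Nat.add_comm]
  have e : (N : ℝ) + a + 0 + 1 = a + 1 + N := by ring
  rw [jc, e]
  have p1 := (poch_pos (x := a + 1) (by linarith) k).ne'
  have f1 : (N.factorial : ℝ) ≠ 0 := by positivity
  have f2 : (k.factorial : ℝ) ≠ 0 := by positivity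
  have f3 : ((N - k).factorial : ℝ) ≠ 0 := by positivity
  have h3 : ((-1 : ℝ) ^ k) * (-1) ^ k = 1 := by rw [← mul_pow]; simp
  have h4 : ((-1 : ℝ) ^ k) ≠ 0 := by positivity
  have h1' : poch (-(N : ℝ)) k = (-1) ^ k * N.factorial / (N - k).factorial := by
    rw [eq_div_iff f3, h1]
  have h2' : poch (a + 1 + k) N = poch (a + 1) N * poch (a + 1 + N) k / poch (a + 1) k := by
    rw [h2]; field_simp
  rw [h1', h2']
  field_simp
  linear_combination (poch (a + 1) N * poch (a + 1 + N) k) * h3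

lemma jac_moment (a : ℝ) (ha : -1 < a) (N j : ℕ) :
    ∑ k ∈ range (N + 1), jc a N k * (1 / (a + 1 + j + k)) =
      (∏ i ∈ range N, ((i : ℝ) - j)) / poch (a + 1 + j) (N + 1) := by
  classical
  let Q : Polynomial ℝ := ∏ i ∈ range N, (Polynomial.C (a + 1 + i) - Polynomial.X)
  have hQ : ∀ x, Q.eval x = ∏ i ∈ range N, (a + 1 + i - x) := by
    intro x; simp [Q, Polynomial.eval_prod]
  have hdeg : Q.degree < #(range (N + 1)) := by
    have h1 : Q.degree ≤ (N : ℕ) := by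
      refine (Polynomial.degree_prod_le _ _).trans ?_
      refine (Finset.sum_le_card_nsmul (range N) _ (1 : WithBot ℕ) ?_).trans ?_
      · intro i _
        refine (Polynomial.degree_sub_le _ _).trans ?_
        refine max_le (Polynomial.degree_C_le.trans ?_) Polynomial.degree_X_le
        exact zero_le_one
      · simp
    refine h1.trans_lt ?_
    rw [card_range]; exact_mod_cast Nat.lt_succ_self N
  let v : ℕ → ℝ := fun k => -(k : ℝ)
  have hv : Set.InjOn v (range (N + 1)) := by
    intro x _ y _ hxy; simpa [v] using hxy
  have hi := Lagrange.eq_interpolate hv hdeg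
  have hpos : ∀ k : ℕ, 0 < a + 1 + j + k := fun k => by
    have : (0 : ℝ) ≤ j := by positivity
    have : (0 : ℝ) ≤ k := by positivity
    linarith
  have hx : ∀ i ∈ range (N + 1), (a + 1 + j : ℝ) ≠ v i := by
    intro i _ h
    have := hpos i
    simp only [v] at h
    linarith
  have key := Lagrange.eval_interpolate_not_at_node (fun i => Q.eval (v i)) hx
  rw [← hi, Lagrange.eval_nodal] at key
  have hnod : ∏ i ∈ range (N + 1), (a + 1 + j - v i) = poch (a + 1 + j) (N + 1) := by
    rw [poch_eq_prod]; refine prod_congr rfl fun i _ => ?_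
    simp [v]
  rw [hnod, hQ] at key
  have hp : poch (a + 1 + j) (N + 1) ≠ 0 := by
    refine (poch_pos ?_ _).ne'
    simpa using hpos 0
  rw [eq_div_iff hp, mul_comm]
  have e : ∏ i ∈ range N, (a + 1 + (i : ℝ) - (a + 1 + j)) = ∏ i ∈ range N, ((i : ℝ) - j) :=
    prod_congr rfl fun i _ => by ring
  rw [e] at key
  rw [key]
  congr 1
  refine sum_congr rfl fun k hk => ?_
  have hk' : k ≤ N := by simpa [Nat.lt_succ_iff] using hk
  rw [jc_eq a ha N k hk', hQ, Lagrange.nodalWeight, prod_inv_distrib, prod_erase_sub N k hk',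
    poch_eq_prod]
  have e2 : ∏ i ∈ range N, (a + 1 + (i : ℝ) - v k) = ∏ i ∈ range N, (a + 1 + k + (i : ℝ)) :=
    prod_congr rfl fun i _ => by simp only [v]; ring
  rw [e2]
  simp only [v, sub_neg_eq_add, one_div]
  ring

lemma int_rpow_mul_pow (a : ℝ) (ha : -1 < a) (j : ℕ) :
    IntervalIntegrable (fun t : ℝ => t ^ a * t ^ j) volume 0 1 ∧
    ∫ t in (0 : ℝ)..1, t ^ a * t ^ j = 1 / (a + 1 + j) := by
  have hj : (0 : ℝ) ≤ j := by positivity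
  have h1 : -1 < a + j := by linarith
  have hE : Set.EqOn (fun t : ℝ => t ^ (a + j)) (fun t : ℝ => t ^ a * t ^ j) (Set.uIoc 0 1) := by
    intro t ht
    rw [Set.uIoc_of_le zero_le_one] at ht
    simp only
    rw [Real.rpow_add ht.1, Real.rpow_natCast]
  constructor
  · exact (intervalIntegral.intervalIntegrable_rpow' h1).congr hE
  · rw [intervalIntegral.integral_of_le zero_le_one,
      ← setIntegral_congr_fun measurableSet_Ioc (by rwa [Set.uIoc_of_le zero_le_one] at hE),
      ← intervalIntegral.integral_of_le zero_le_one, integral_rpow (Or.inl h1)]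
    have : a + j + 1 ≠ 0 := by linarith
    rw [Real.one_rpow, Real.zero_rpow this]
    congr 1 <;> ring

lemma jacobi_int_pow (a : ℝ) (ha : -1 < a) (N j : ℕ) :
    IntervalIntegrable (fun t : ℝ => t ^ a * jacobiP a 0 N (1 - 2 * t) * t ^ j) volume 0 1 ∧
    ∫ t in (0 : ℝ)..1, t ^ a * jacobiP a 0 N (1 - 2 * t) * t ^ j =
      (∏ i ∈ range N, ((i : ℝ) - j)) / poch (a + 1 + j) (N + 1) := by
  have hE : (fun t : ℝ => t ^ a * jacobiP a 0 N (1 - 2 * t) * t ^ j) =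
      fun t : ℝ => ∑ k ∈ range (N + 1), jc a N k * (t ^ a * t ^ (j + k)) := by
    funext t
    rw [jacobiP_eq, mul_sum, sum_mul]
    refine sum_congr rfl fun k _ => ?_
    ring
  have hI : ∀ k ∈ range (N + 1), IntervalIntegrable
      (fun t : ℝ => jc a N k * (t ^ a * t ^ (j + k))) volume 0 1 := fun k _ =>
    (int_rpow_mul_pow a ha (j + k)).1.const_mul _
  rw [hE]
  constructor
  · have h := IntervalIntegrable.sum _ hI
    have e : (∑ k ∈ range (N + 1), fun t : ℝ => jc a N k * (t ^ a * t ^ (j + k))) =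
        fun t : ℝ => ∑ k ∈ range (N + 1), jc a N k * (t ^ a * t ^ (j + k)) := by
      funext t; simp
    rw [e] at h
    exact h
  · rw [intervalIntegral.integral_finsetSum hI, ← jac_moment a ha]
    refine sum_congr rfl fun k _ => ?_
    rw [intervalIntegral.integral_const_mul, (int_rpow_mul_pow a ha (j + k)).2]
    push_cast
    rw [add_assoc (a + 1)]

lemma jacobi_int_mul (a : ℝ) (ha : -1 < a) (N M : ℕ) :
    ∫ t in (0 : ℝ)..1, t ^ a * jacobiP a 0 N (1 - 2 * t) * jacobiP a 0 M (1 - 2 * t) =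
      ∑ j ∈ range (M + 1), jc a M j *
        ((∏ i ∈ range N, ((i : ℝ) - j)) / poch (a + 1 + j) (N + 1)) := by
  have hE : (fun t : ℝ => t ^ a * jacobiP a 0 N (1 - 2 * t) * jacobiP a 0 M (1 - 2 * t)) =
      fun t : ℝ => ∑ j ∈ range (M + 1),
        jc a M j * (t ^ a * jacobiP a 0 N (1 - 2 * t) * t ^ j) := by
    funext t
    rw [jacobiP_eq a M, mul_sum]
    refine sum_congr rfl fun k _ => ?_
    ring
  rw [hE, intervalIntegral.integral_finsetSum
    (fun j _ => (jacobi_int_pow a ha N j).1.const_mul _)]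
  refine sum_congr rfl fun k _ => ?_
  rw [intervalIntegral.integral_const_mul, (jacobi_int_pow a ha N k).2]

lemma prod_sub_zero {N j : ℕ} (h : j < N) : ∏ i ∈ range N, ((i : ℝ) - j) = 0 :=
  prod_eq_zero (mem_range.2 h) (sub_self _)

lemma jacobi_orth_lt (a : ℝ) (ha : -1 < a) (N M : ℕ) (h : M < N) :
    ∫ t in (0 : ℝ)..1, t ^ a * jacobiP a 0 N (1 - 2 * t) * jacobiP a 0 M (1 - 2 * t) = 0 := by
  rw [jacobi_int_mul a ha]
  refine sum_eq_zero fun j hj => ?_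
  rw [prod_sub_zero (by simp at hj; omega)]; simp

lemma jacobi_orth (a : ℝ) (ha : -1 < a) (N M : ℕ) (h : M ≠ N) :
    ∫ t in (0 : ℝ)..1, t ^ a * jacobiP a 0 N (1 - 2 * t) * jacobiP a 0 M (1 - 2 * t) = 0 := by
  rcases lt_or_gt_of_ne h with h | h
  · exact jacobi_orth_lt a ha N M h
  · have := jacobi_orth_lt a ha M N h
    refine Eq.trans ?_ this
    congr 1; funext t; ring

lemma jacobi_norm (a : ℝ) (ha : -1 < a) (N : ℕ) :
    ∫ t in (0 : ℝ)..1, t ^ a * jacobiP a 0 N (1 - 2 * t) * jacobiP a 0 N (1 - 2 * t) =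
      1 / (a + 2 * N + 1) := by
  rw [jacobi_int_mul a ha, sum_range_succ, sum_eq_zero, zero_add]
  · rw [jc_eq a ha N N le_rfl]
    have h := poch_neg_nat N N le_rfl
    rw [poch_eq_prod] at h
    simp at h
    have e : ∏ i ∈ range N, ((i : ℝ) - N) = (-1) ^ N * N.factorial := by
      rw [← h]; exact prod_congr rfl fun i _ => by ring
    have hN : (0 : ℝ) ≤ N := by positivity
    have p := (poch_pos (x := a + 1 + N) (by linarith) N).ne'
    have q : a + 1 + N + N ≠ 0 := by linarith
    have q' : a + 2 * N + 1 ≠ 0 := by linarith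
    rw [e, poch_eq_prod _ (N + 1), prod_range_succ, ← poch_eq_prod]
    have f1 : (N.factorial : ℝ) ≠ 0 := by positivity
    have e3 : a + 1 + (N : ℝ) + N = a + 2 * N + 1 := by ring
    rw [e3]
    simp
    field_simp
  · intro j hj
    rw [prod_sub_zero (by simpa using hj)]; simp

/-- the iterated integral kernel -/
def KK (s : ℕ) (f : ℝ → ℝ) (t : ℝ) : ℝ :=
  ∫ u in (-1 : ℝ)..t, (t - u) ^ (s - 1) / ((s - 1).factorial : ℝ) * f u

lemma KK_one (f : ℝ → ℝ) (t : ℝ) : KK 1 f t = ∫ u in (-1 : ℝ)..t, f u := by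
  simp [KK]

lemma KK_hasDerivAt (f : ℝ → ℝ) (hf : Continuous f) (t : ℝ) : HasDerivAt (KK 1 f) (f t) t := by
  have : KK 1 f = fun t => ∫ u in (-1 : ℝ)..t, f u := funext (KK_one f)
  rw [this]
  exact intervalIntegral.integral_hasDerivAt_right (hf.intervalIntegrable _ _)
    (hf.stronglyMeasurableAtFilter _ _) hf.continuousAt

lemma KK_succ (s : ℕ) (f : ℝ → ℝ) (hf : Continuous f) : KK (s + 2) f = KK (s + 1) (KK 1 f) := by
  funext t
  have hG : Continuous (KK 1 f) :=
    continuous_iff_continuousAt.2 fun t => (KK_hasDerivAt f hf t).continuousAt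
  have hu : ∀ u : ℝ, HasDerivAt (fun u : ℝ => (t - u) ^ (s + 1) / ((s + 1).factorial : ℝ))
      (-((t - u) ^ s / (s.factorial : ℝ))) u := by
    intro u
    have h := (((hasDerivAt_id u).const_sub t).pow (s + 1)).div_const ((s + 1).factorial : ℝ)
    refine h.congr_deriv ?_
    have : (s.factorial : ℝ) ≠ 0 := by positivity
    rw [Nat.factorial_succ]
    push_cast
    simp only [id, Nat.add_sub_cancel]
    field_simp
  have h := intervalIntegral.integral_mul_deriv_eq_deriv_mul (a := -1) (b := t)
    (u := fun u : ℝ => (t - u) ^ (s + 1) / ((s + 1).factorial : ℝ))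
    (u' := fun u => (-((t - u) ^ s / (s.factorial : ℝ)))) (v := KK 1 f) (v' := f)
    (fun x _ => hu x) (fun x _ => KK_hasDerivAt f hf x)
    (Continuous.intervalIntegrable (by fun_prop) _ _) (hf.intervalIntegrable _ _)
  have h0 : KK 1 f (-1) = 0 := by simp [KK_one]
  unfold KK at h ⊢
  simp only [Nat.add_sub_cancel] at h ⊢
  rw [show s + 2 - 1 = s + 1 by omega, h]
  simp [intervalIntegral.integral_neg]

lemma KK_iter (s : ℕ) : ∀ f : ℝ → ℝ, Continuous f →
    iteratedDeriv (s + 1) (KK (s + 1) f) = f ∧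
    ∀ k < s + 1, iteratedDeriv k (KK (s + 1) f) (-1) = 0 := by
  induction s with
  | zero =>
    intro f hf
    constructor
    · funext t
      simp only [zero_add, iteratedDeriv_one]
      exact (KK_hasDerivAt f hf t).deriv
    · intro k hk
      have : k = 0 := by omega
      subst this
      simp [KK_one]
  | succ s ih =>
    intro f hf
    have hG : Continuous (KK 1 f) :=
      continuous_iff_continuousAt.2 fun t => (KK_hasDerivAt f hf t).continuousAt
    obtain ⟨h1, h2⟩ := ih _ hG
    rw [KK_succ s f hf]
    constructor
    · rw [iteratedDeriv_succ, h1]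
      funext t
      exact (KK_hasDerivAt f hf t).deriv
    · intro k hk
      rcases Nat.lt_succ_iff_lt_or_eq.1 hk with hk | hk
      · exact h2 k hk
      · rw [hk, h1]; simp [KK_one]

lemma jacobiPhat_continuous (a b : ℝ) (n : ℕ) : Continuous (jacobiPhat a b n) := by
  unfold jacobiPhat jacobiP
  fun_prop

lemma iter_pow_shift (n : ℕ) : ∀ k, iteratedDeriv k (fun t : ℝ => (1 + t) ^ n / (n.factorial : ℝ)) =
    fun t => (n.descFactorial k : ℝ) * (1 + t) ^ (n - k) / (n.factorial : ℝ) := by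
  intro k
  induction k with
  | zero => simp
  | succ k ih =>
    rw [iteratedDeriv_succ, ih]
    funext t
    have h := (((((hasDerivAt_id t).const_add 1).pow (n - k)).const_mul
      (n.descFactorial k : ℝ)).div_const (n.factorial : ℝ)).deriv
    refine h.trans ?_
    rw [Nat.descFactorial_succ]
    push_cast
    simp only [id, Nat.sub_sub]
    ring

lemma J_top_lt (a : ℝ) (s n : ℕ) (h : n < s) : iteratedDeriv s (jacobiJneg a s n) = 0 := by
  have : jacobiJneg a s n = fun t : ℝ => (1 + t) ^ n / (n.factorial : ℝ) := by
    funext t; simp [jacobiJneg, jacobiJ, h]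
  rw [this, iter_pow_shift]
  funext t
  simp [Nat.descFactorial_eq_zero_iff_lt.2 h]

lemma J_low_lt (a : ℝ) (s n k : ℕ) (h : n < s) :
    iteratedDeriv k (jacobiJneg a s n) (-1) = if k = n then 1 else 0 := by
  have : jacobiJneg a s n = fun t : ℝ => (1 + t) ^ n / (n.factorial : ℝ) := by
    funext t; simp [jacobiJneg, jacobiJ, h]
  rw [this, iter_pow_shift]
  split_ifs with hk
  · subst hk
    have : (k.factorial : ℝ) ≠ 0 := by positivity
    simp [Nat.descFactorial_self, this]
  · rcases lt_or_gt_of_ne hk with h | h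
    · have : n - k ≠ 0 := by omega
      simp [this]
    · simp [Nat.descFactorial_eq_zero_iff_lt.2 h]

lemma J_eq_KK (a : ℝ) (s n : ℕ) (h : s ≤ n) :
    jacobiJneg a s n = KK s (jacobiPhat (a + s) 0 (n - s)) := by
  funext t; simp [jacobiJneg, jacobiJ, KK, not_lt.2 h]

lemma J_top_ge (a : ℝ) (s n : ℕ) (hs : 1 ≤ s) (h : s ≤ n) :
    iteratedDeriv s (jacobiJneg a s n) = jacobiPhat (a + s) 0 (n - s) := by
  rw [J_eq_KK a s n h]
  obtain ⟨s, rfl⟩ := Nat.exists_eq_add_of_le' hs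
  exact (KK_iter s _ (jacobiPhat_continuous _ _ _)).1

lemma J_low_ge (a : ℝ) (s n k : ℕ) (hs : 1 ≤ s) (h : s ≤ n) (hk : k < s) :
    iteratedDeriv k (jacobiJneg a s n) (-1) = 0 := by
  rw [J_eq_KK a s n h]
  obtain ⟨s, rfl⟩ := Nat.exists_eq_add_of_le' hs
  exact (KK_iter s _ (jacobiPhat_continuous _ _ _)).2 k hk

lemma J_low (a : ℝ) (s n k : ℕ) (hs : 1 ≤ s) (hk : k < s) :
    iteratedDeriv k (jacobiJneg a s n) (-1) = if k = n then 1 else 0 := by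
  rcases lt_or_ge n s with h | h
  · exact J_low_lt a s n k h
  · rw [J_low_ge a s n k hs h hk, if_neg (by omega)]

lemma iter_comp (g : ℝ → ℝ) (y : ℝ) (k : ℕ) :
    iteratedDeriv k (fun τ => g (1 - 2 * τ) * y) =
      fun τ => (-2) ^ k * iteratedDeriv k g (1 - 2 * τ) * y := by
  induction k with
  | zero => simp
  | succ k ih =>
    rw [iteratedDeriv_succ, ih, iteratedDeriv_succ]
    funext τ
    set G := iteratedDeriv k g
    have h1 : deriv (fun τ => G (1 - 2 * τ)) τ = (-2) * deriv G (1 - 2 * τ) := by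
      have := deriv_comp_mul_left (2 : ℝ) (fun u => G (1 - u)) τ
      rw [this, deriv_comp_const_sub]
      simp
    rw [deriv_mul_const_field, deriv_const_mul_field, h1]
    ring

lemma pdT_coneSS (d : ℕ) (β : ℝ) (s n m k : ℕ) (Y : Euc d → ℝ) (x : Euc d) (t : ℝ) :
    pdT k (coneSS d β s n m Y) (x, t) =
      (-2) ^ k * iteratedDeriv k (jacobiJneg (2 * m + β + d - 1) s (n - m)) (1 - 2 * t) * Y x := by
  simp only [pdT, coneSS]
  rw [iter_comp]

/-- one-dimensional Gaussian weight -/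
def gw (x : ℝ) : ℝ := Real.exp (-(1 / 2) * x ^ 2)

/-- Gaussian moments -/
def GM (k : ℕ) : ℝ := ∫ x : ℝ, x ^ k * gw x

lemma gw_int (k : ℕ) : Integrable (fun x : ℝ => x ^ k * gw x) := by
  have hk : (-1 : ℝ) < k := by
    have : (0 : ℝ) ≤ k := by positivity
    linarith
  have := integrable_rpow_mul_exp_neg_mul_sq (b := 1 / 2) (by norm_num) hk
  simpa [Real.rpow_natCast, gw] using this

lemma gw_deriv (x : ℝ) : HasDerivAt (fun x => -gw x) (x * gw x) x := by
  have h1 : HasDerivAt (fun x : ℝ => -(1 / 2) * x ^ 2) (-x) x := by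
    refine ((hasDerivAt_pow 2 x).const_mul (-(1 / 2) : ℝ)).congr_deriv ?_
    simp
  refine h1.exp.neg.congr_deriv ?_
  simp only [gw]; ring

lemma GM_succ (k : ℕ) : GM (k + 1) = k * GM (k - 1) := by
  have h := integral_mul_deriv_eq_deriv_mul_of_integrable
    (u := fun x : ℝ => x ^ k) (u' := fun x : ℝ => k * x ^ (k - 1))
    (v := fun x => -gw x) (v' := fun x => x * gw x)
    (fun x _ => hasDerivAt_pow k x) (fun x _ => gw_deriv x)
    (by
      refine (gw_int (k + 1)).congr (Filter.Eventually.of_forall fun x => ?_)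
      simp only [Pi.mul_apply]; ring)
    (by
      refine ((gw_int (k - 1)).const_mul (-(k : ℝ))).congr (Filter.Eventually.of_forall fun x => ?_)
      simp only [Pi.mul_apply]; ring)
    (by
      refine ((gw_int k).neg).congr (Filter.Eventually.of_forall fun x => ?_)
      simp only [Pi.mul_apply, Pi.neg_apply]; ring)
  have e1 : GM (k + 1) = ∫ x : ℝ, x ^ k * (x * gw x) := by
    unfold GM; congr 1; funext x; ring
  rw [e1, h, GM, ← integral_const_mul, ← integral_neg]
  congr 1; funext x; ring

/-- Gaussian expectation functional on polynomials -/
def GE {d : ℕ} (p : MvPolynomial (Fin d) ℝ) : ℝ :=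
  ∫ x : Fin d → ℝ, MvPolynomial.eval x p * ∏ i, gw (x i)

lemma eval_mono_mul {d : ℕ} (α : Fin d →₀ ℕ) (c : ℝ) (x : Fin d → ℝ) :
    MvPolynomial.eval x (MvPolynomial.monomial α c) * ∏ i, gw (x i) =
      c * ∏ i, (x i ^ α i * gw (x i)) := by
  rw [MvPolynomial.eval_monomial, Finsupp.prod_fintype _ _ (by simp), prod_mul_distrib, mul_assoc]

lemma GE_int {d : ℕ} (p : MvPolynomial (Fin d) ℝ) :
    Integrable (fun x : Fin d → ℝ => MvPolynomial.eval x p * ∏ i, gw (x i)) := by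
  induction p using MvPolynomial.induction_on' with
  | monomial α c =>
    simp only [eval_mono_mul]
    exact (Integrable.fintype_prod (fun i => gw_int (α i))).const_mul c
  | add p q hp hq =>
    simp only [map_add, add_mul]
    exact hp.add hq

lemma GE_add {d : ℕ} (p q : MvPolynomial (Fin d) ℝ) : GE (p + q) = GE p + GE q := by
  unfold GE
  rw [← integral_add (GE_int p) (GE_int q)]
  congr 1; funext x; simp [add_mul]

lemma GE_sum {d : ℕ} {ι : Type*} (s : Finset ι) (p : ι → MvPolynomial (Fin d) ℝ) :
    GE (∑ i ∈ s, p i) = ∑ i ∈ s, GE (p i) := by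
  classical
  induction s using Finset.induction_on with
  | empty => simp [GE]
  | insert i s hi ih => rw [sum_insert hi, sum_insert hi, GE_add, ih]

lemma GE_smul {d : ℕ} (k : ℕ) (p : MvPolynomial (Fin d) ℝ) : GE (k • p) = k * GE p := by
  unfold GE
  rw [← integral_const_mul]
  congr 1; funext x; simp [mul_assoc]

lemma GE_mono {d : ℕ} (α : Fin d →₀ ℕ) (c : ℝ) :
    GE (MvPolynomial.monomial α c) = c * ∏ i, GM (α i) := by
  unfold GE
  simp only [eval_mono_mul]
  rw [integral_const_mul, integral_fintype_prod_volume_eq_prod (fun i x => x ^ α i * gw x)]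
  rfl

lemma GE_parts {d : ℕ} (i : Fin d) (p : MvPolynomial (Fin d) ℝ) :
    GE (MvPolynomial.X i * p) = GE (MvPolynomial.pderiv i p) := by
  induction p using MvPolynomial.induction_on' with
  | monomial α c =>
    rw [MvPolynomial.pderiv_monomial, MvPolynomial.X, MvPolynomial.monomial_mul, GE_mono, GE_mono]
    rw [← mul_prod_erase univ _ (mem_univ i), ← mul_prod_erase univ (fun j => GM ((α - _) j))
      (mem_univ i)]
    have e1 : ∏ j ∈ univ.erase i, GM ((Finsupp.single i 1 + α : Fin d →₀ ℕ) j) =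
        ∏ j ∈ univ.erase i, GM (α j) := by
      refine prod_congr rfl fun j hj => ?_
      have : i ≠ j := fun h => (mem_erase.1 hj).1 h.symm
      simp [Finsupp.single_apply, this]
    have e2 : ∏ j ∈ univ.erase i, GM ((α - Finsupp.single i 1 : Fin d →₀ ℕ) j) =
        ∏ j ∈ univ.erase i, GM (α j) := by
      refine prod_congr rfl fun j hj => ?_
      have : i ≠ j := fun h => (mem_erase.1 hj).1 h.symm
      simp [Finsupp.single_apply, this]
    rw [e1, e2]
    have e3 : (Finsupp.single i 1 + α : Fin d →₀ ℕ) i = α i + 1 := by simp [add_comm]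
    have e4 : (α - Finsupp.single i 1 : Fin d →₀ ℕ) i = α i - 1 := by simp
    rw [e3, e4, GM_succ]
    ring
  | add p q hp hq => rw [mul_add, map_add, GE_add, GE_add, hp, hq]

lemma GE_harm {d m : ℕ} (q q' : MvPolynomial (Fin d) ℝ) (hq : q.IsHomogeneous m)
    (hh : (∑ i : Fin d, MvPolynomial.pderiv i (MvPolynomial.pderiv i q)) = 0) :
    m * GE (q * q') = ∑ i, GE (MvPolynomial.pderiv i q * MvPolynomial.pderiv i q') := by
  have h1 : m • (q * q') = ∑ i, MvPolynomial.X i * (MvPolynomial.pderiv i q * q') := by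
    rw [← smul_mul_assoc, ← hq.sum_X_mul_pderiv, sum_mul]
    exact sum_congr rfl fun i _ => by ring
  rw [← GE_smul, h1, GE_sum]
  have h2 : ∀ i : Fin d, GE (MvPolynomial.X i * (MvPolynomial.pderiv i q * q')) =
      GE (MvPolynomial.pderiv i (MvPolynomial.pderiv i q) * q') +
      GE (MvPolynomial.pderiv i q * MvPolynomial.pderiv i q') := by
    intro i
    rw [GE_parts, Derivation.leibniz, ← GE_add]
    congr 1
    simp only [smul_eq_mul]; ring
  simp only [h2]
  rw [sum_add_distrib, ← GE_sum, ← sum_mul, hh]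
  simp [GE]

lemma GE_orth {d m m' : ℕ} (q q' : MvPolynomial (Fin d) ℝ) (hq : q.IsHomogeneous m)
    (hh : (∑ i : Fin d, MvPolynomial.pderiv i (MvPolynomial.pderiv i q)) = 0)
    (hq' : q'.IsHomogeneous m')
    (hh' : (∑ i : Fin d, MvPolynomial.pderiv i (MvPolynomial.pderiv i q')) = 0)
    (hne : m ≠ m') : GE (q * q') = 0 := by
  have h1 := GE_harm q q' hq hh
  have h2 := GE_harm q' q hq' hh'
  rw [mul_comm q' q] at h2
  have h3 : (m : ℝ) * GE (q * q') = m' * GE (q * q') := by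
    rw [h1, h2]
    exact sum_congr rfl fun i _ => by rw [mul_comm]
  have h4 : ((m : ℝ) - m') * GE (q * q') = 0 := by linarith
  rcases mul_eq_zero.1 h4 with h | h
  · exact absurd (by exact_mod_cast sub_eq_zero.1 h) hne
  · exact h

lemma hom_eval {d m : ℕ} (q : MvPolynomial (Fin d) ℝ) (hq : q.IsHomogeneous m) (t : ℝ)
    (x : Fin d → ℝ) :
    MvPolynomial.eval (fun i => t * x i) q = t ^ m * MvPolynomial.eval x q := by
  rw [MvPolynomial.eval_eq', MvPolynomial.eval_eq', mul_sum]
  refine sum_congr rfl fun α hα => ?_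
  have := hq (MvPolynomial.mem_support_iff.1 hα)
  have h2 : ∑ i, α i = m := by
    rw [← this, Finsupp.weight_apply, Finsupp.sum_fintype] <;> simp
  simp only [mul_pow, prod_mul_distrib]
  rw [prod_pow_eq_pow_sum, h2]
  ring

lemma harm_hom {d m : ℕ} {Y : Euc d → ℝ} (hY : IsSolidHarmonic d m Y) (t : ℝ) (x : Euc d) :
    Y (t • x) = t ^ m * Y x := by
  obtain ⟨q, hq, -, h⟩ := hY
  rw [h, h, ← hom_eval q hq]
  rfl

open Module in
lemma polar {d : ℕ} (hd : 2 ≤ d) (k : ℕ) (Z : Euc d → ℝ)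
    (hZ : ∀ (t : ℝ) x, Z (t • x) = t ^ k * Z x) :
    ∃ c : ℝ, 0 < c ∧
      ∫ x : Euc d, Z x * Real.exp (-(1 / 2) * ‖x‖ ^ 2) = sphInt d Z * c := by
  have : Nonempty (Fin d) := ⟨⟨0, by omega⟩⟩
  refine ⟨∫ r : Set.Ioi (0 : ℝ), (r : ℝ) ^ k * gw r ∂(Measure.volumeIoiPow (finrank ℝ (Euc d) - 1)),
    ?_, ?_⟩
  · simp only [Measure.volumeIoiPow, ENNReal.ofReal]
    rw [integral_withDensity_eq_integral_smul
      ((measurable_subtype_coe.pow_const _).real_toNNReal),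
      integral_subtype_comap measurableSet_Ioi
        (fun a : ℝ => Real.toNNReal (a ^ (finrank ℝ (Euc d) - 1)) • (a ^ k * gw a))]
    have e : Set.EqOn (fun a : ℝ => Real.toNNReal (a ^ (finrank ℝ (Euc d) - 1)) • (a ^ k * gw a))
        (fun a : ℝ => a ^ (finrank ℝ (Euc d) - 1 + k) * gw a) (Set.Ioi 0) := by
      intro x hx
      have hx : 0 < x := hx
      simp only
      rw [NNReal.smul_def, Real.coe_toNNReal _ (pow_nonneg hx.le _), smul_eq_mul]
      ring
    rw [setIntegral_congr_fun measurableSet_Ioi e]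
    rw [setIntegral_pos_iff_support_of_nonneg_ae]
    · refine lt_of_lt_of_le (b := volume (Set.Ioi (0 : ℝ))) (by simp) (measure_mono ?_)
      intro x hx
      have hx' : 0 < x := hx
      refine ⟨?_, hx⟩
      have : 0 < gw x := Real.exp_pos _
      simp only [Function.mem_support]
      positivity
    · refine (ae_restrict_iff' measurableSet_Ioi).2 (Filter.Eventually.of_forall fun x hx => ?_)
      have hx' : 0 < x := hx
      have : 0 < gw x := Real.exp_pos _
      simp only [Pi.zero_apply]
      positivity
    · exact (gw_int _).integrableOn
  · calc
    ∫ x : Euc d, Z x * Real.exp (-(1 / 2) * ‖x‖ ^ 2)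
      = ∫ x : ({(0)}ᶜ : Set (Euc d)), Z x * Real.exp (-(1 / 2) * ‖x.1‖ ^ 2)
          ∂((volume : Measure (Euc d)).comap (↑)) := by
      rw [integral_subtype_comap (measurableSet_singleton _).compl
        fun x : Euc d ↦ Z x * Real.exp (-(1 / 2) * ‖x‖ ^ 2),
        restrict_compl_singleton]
    _ = ∫ p : Metric.sphere (0 : Euc d) 1 × Set.Ioi (0 : ℝ), Z p.1 * ((p.2 : ℝ) ^ k * gw p.2)
          ∂(volume : Measure (Euc d)).toSphere.prod (.volumeIoiPow (finrank ℝ (Euc d) - 1)) := by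
      rw [← (volume : Measure (Euc d)).measurePreserving_homeomorphUnitSphereProd.integral_comp
        (Homeomorph.measurableEmbedding _)]
      congr 1
      funext x
      have hx : ‖(x : Euc d)‖ ≠ 0 := norm_ne_zero_iff.2 x.2
      have h := hZ ‖(x : Euc d)‖ (‖(x : Euc d)‖⁻¹ • (x : Euc d))
      rw [smul_smul, mul_inv_cancel₀ hx, one_smul] at h
      rw [h]
      simp [gw]
      ring
    _ = _ := by
      rw [integral_prod_mul (fun ξ : Metric.sphere (0 : Euc d) 1 => Z ξ)
        (fun r : Set.Ioi (0 : ℝ) => (r : ℝ) ^ k * gw r)]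
      rfl

lemma sph_orth {d m m' : ℕ} (hd : 2 ≤ d) {Y Y' : Euc d → ℝ} (hY : IsSolidHarmonic d m Y)
    (hY' : IsSolidHarmonic d m' Y') (hne : m ≠ m') : sphInt d (fun ξ => Y ξ * Y' ξ) = 0 := by
  obtain ⟨c, hc, h⟩ := polar hd (m + m') (fun ξ => Y ξ * Y' ξ) (fun t x => by
    simp only [harm_hom hY, harm_hom hY']; ring)
  obtain ⟨q, hq, hh, e⟩ := hY
  obtain ⟨q', hq', hh', e'⟩ := hY'
  have h0 := GE_orth q q' hq hh hq' hh' hne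
  have : ∫ x : Euc d, Y x * Y' x * Real.exp (-(1 / 2) * ‖x‖ ^ 2) = GE (q * q') := by
    unfold GE
    rw [← (PiLp.volume_preserving_ofLp (Fin d)).integral_comp
      (MeasurableEquiv.toLp 2 (Fin d → ℝ)).symm.measurableEmbedding]
    congr 1
    funext x
    rw [e, e', map_mul, EuclideanSpace.norm_sq_eq, mul_sum, Real.exp_sum]
    simp only [gw, Real.norm_eq_abs, sq_abs]
  rw [this, h0] at h
  rcases mul_eq_zero.1 h.symm with h | h
  · exact h
  · exact absurd h hc.ne'

lemma sob_formula (d : ℕ) (s : ℕ) (hs : 1 ≤ s) (β : ℝ) (lam : ℕ → ℝ) (m m' n n' : ℕ)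
    (Y Y' : Euc d → ℝ) (hY : IsSolidHarmonic d m Y) (hY' : IsSolidHarmonic d m' Y') :
    coneSobInner d β s lam (coneSS d β s n m Y) (coneSS d β s n' m' Y') =
      (1 / omegaS d) * sphInt d (fun ξ => Y ξ * Y' ξ) *
      ((∫ t in (0 : ℝ)..1, 4 ^ s * (t ^ (d - 1) * t ^ (m + m') * t ^ (β + s) *
          iteratedDeriv s (jacobiJneg (2 * m + β + d - 1) s (n - m)) (1 - 2 * t) *
          iteratedDeriv s (jacobiJneg (2 * m' + β + d - 1) s (n' - m')) (1 - 2 * t))) +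
        ∑ k ∈ range s, lam k * (4 ^ k * ((if k = n - m then 1 else 0) *
          (if k = n' - m' then 1 else 0)))) := by
  have h4 : ∀ k : ℕ, ((-2 : ℝ) ^ k) * (-2) ^ k = 4 ^ k := fun k => by
    rw [← mul_pow]; norm_num
  unfold coneSobInner
  rw [mul_add]
  congr 1
  · rw [mul_assoc]
    congr 1
    rw [coneInt, ← intervalIntegral.integral_const_mul]
    congr 1
    funext t
    simp only [pdT_coneSS, harm_hom hY, harm_hom hY', sphInt]
    rw [← integral_const_mul, ← integral_mul_const]
    congr 1
    funext ξ
    rw [← h4]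
    ring
  · rw [mul_sum]
    refine sum_congr rfl fun k hk => ?_
    have hk' : k < s := mem_range.1 hk
    have e : (1 - 2 * 1 : ℝ) = -1 := by norm_num
    simp only [pdT_coneSS, e, J_low _ s _ k hs hk', sphInt]
    rw [mul_assoc (1 / omegaS d), div_eq_mul_one_div, mul_comm (lam k), mul_assoc]
    congr 1
    rw [← integral_const_mul, ← integral_mul_const]
    congr 1
    funext ξ
    rw [← h4]
    ring

lemma int_weight (d : ℕ) (hd : 2 ≤ d) (s m : ℕ) (β a : ℝ) (ha : a = 2 * m + β + d - 1 + s)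
    (N M : ℕ) :
    ∫ t in (0 : ℝ)..1, 4 ^ s * (t ^ (d - 1) * t ^ (m + m) * t ^ (β + s) *
      jacobiPhat a 0 N (1 - 2 * t) * jacobiPhat a 0 M (1 - 2 * t)) =
    4 ^ s * (jacobiA a 0 N * jacobiA a 0 M) * ∫ t in (0 : ℝ)..1,
      t ^ a * jacobiP a 0 N (1 - 2 * t) * jacobiP a 0 M (1 - 2 * t) := by
  rw [← intervalIntegral.integral_const_mul, intervalIntegral.integral_of_le zero_le_one,
    intervalIntegral.integral_of_le zero_le_one]
  refine setIntegral_congr_fun measurableSet_Ioc fun t ht => ?_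
  have e : t ^ a = t ^ (d - 1) * t ^ (m + m) * t ^ (β + s) := by
    rw [← pow_add, ← Real.rpow_natCast, ← Real.rpow_add ht.1, ha]
    congr 1
    push_cast [Nat.cast_sub (show 1 ≤ d by omega)]
    ring
  simp only [jacobiPhat, e]
  ring

lemma hHat_eq (a : ℝ) (ha : -1 < a) (N : ℕ) :
    hHat a 0 N = 2 ^ (a + 1) * jacobiA a 0 N ^ 2 * (1 / (a + 2 * N + 1)) := by
  have h1 : a + 1 ≠ 0 := by linarith
  have hN : (0 : ℝ) ≤ N := by positivity
  have hc : cconst a 0 = a + 1 := by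
    have : Real.Gamma (a + 1) ≠ 0 := (Real.Gamma_pos_of_pos (by linarith)).ne'
    rw [cconst, show a + 0 + 2 = (a + 1) + 1 by ring, Real.Gamma_add_one h1]
    simp [Real.Gamma_one]
    field_simp
  have hp : poch (a + 1) N * (a + N + 1) = (a + 1) * poch (a + 2) N := by
    have e1 := poch_add (a + 1) N 1
    have e2 := poch_add (a + 1) 1 N
    rw [Nat.add_comm 1 N, e1] at e2
    simp only [poch_eq_prod _ 1, prod_range_one, Nat.cast_zero, Nat.cast_one, add_zero] at e2
    rw [show a + 1 + 1 = a + 2 by ring] at e2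
    linear_combination e2
  have hf : poch (0 + 1) N = N.factorial := by
    rw [poch, zero_add]; exact ascPochhammer_eval_one ℝ N
  have p2 := (poch_pos (x := a + 2) (by linarith) N).ne'
  have f : (N.factorial : ℝ) ≠ 0 := by positivity
  have q : a + 2 * N + 1 ≠ 0 := by linarith
  have hh : hJac a 0 N = (a + 1) * (1 / (a + 2 * N + 1)) := by
    rw [hJac, hf, add_zero, show poch (a + 1) N * (N.factorial : ℝ) * (a + N + 1) =
      (N.factorial : ℝ) * (poch (a + 1) N * (a + N + 1)) by ring, hp]
    field_simp
  rw [hHat, hc, hh, add_zero]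
  field_simp

/-- orthogonality and norms of the Sobolev basis `S_{m,Y}^{n,(β,-s)}`. -/
theorem coneSS_orthogonal (d : ℕ) (hd : 2 ≤ d) (s : ℕ) (hs : 1 ≤ s) (β : ℝ)
    (hβ : -(d : ℝ) - s < β) (lam : ℕ → ℝ) (hlam : ∀ k, k ≤ s - 1 → 0 < lam k)
    (m m' n n' : ℕ) (hm : m ≤ n) (hm' : m' ≤ n')
    (Y Y' : Euc d → ℝ) (hY : IsSolidHarmonic d m Y) (hY' : IsSolidHarmonic d m' Y') :
    ((n ≠ n' ∨ sphInt d (fun ξ => Y ξ * Y' ξ) = 0) →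
      coneSobInner d β s lam (coneSS d β s n m Y) (coneSS d β s n' m' Y') = 0) ∧
    ((n = n' ∧ m = m' ∧ Y = Y' ∧ (1 / omegaS d) * sphInt d (fun ξ => Y ξ * Y ξ) = 1) →
      ((n - m ≤ s - 1 →
          coneSobInner d β s lam (coneSS d β s n m Y) (coneSS d β s n m Y)
            = 2 ^ (2 * (n - m)) * lam (n - m)) ∧
        (s ≤ n - m →
          coneSobInner d β s lam (coneSS d β s n m Y) (coneSS d β s n m Y)
            = 2 ^ ((s : ℝ) - β - 2 * m - d)
                * hHat ((s : ℝ) + 2 * m + β + d - 1) 0 (n - m - s)))) := by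
  have hmn : (0 : ℝ) ≤ m := by positivity
  have ha : ∀ a : ℝ, a = 2 * m + β + d - 1 + s → -1 < a := fun a h => by rw [h]; linarith
  constructor
  · intro h
    rw [sob_formula d s hs β lam m m' n n' Y Y' hY hY']
    by_cases h0 : sphInt d (fun ξ => Y ξ * Y' ξ) = 0
    · rw [h0]; simp
    have hne : n ≠ n' := h.resolve_right h0
    have hmm : m = m' := by
      by_contra hmm
      exact h0 (sph_orth hd hY hY' hmm)
    subst hmm
    have hnn : n - m ≠ n' - m := by omega
    have hsum : ∑ k ∈ range s, lam k * (4 ^ k * ((if k = n - m then (1 : ℝ) else 0) *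
          (if k = n' - m then 1 else 0))) = 0 := by
      refine sum_eq_zero fun k _ => ?_
      split_ifs with h1 h2
      · omega
      all_goals simp
    rw [hsum, add_zero]
    rcases lt_or_ge (n - m) s with h1 | h1
    · rw [J_top_lt _ s _ h1]; simp
    rcases lt_or_ge (n' - m) s with h2 | h2
    · rw [J_top_lt _ s (n' - m) h2]; simp
    rw [J_top_ge _ s _ hs h1, J_top_ge _ s _ hs h2, int_weight d hd s m β _ rfl,
      jacobi_orth _ (ha _ rfl) _ _ (by omega)]
    simp
  · rintro ⟨-, -, -, hnorm⟩
    rw [sob_formula d s hs β lam m m n n Y Y hY hY, hnorm, one_mul]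
    constructor
    · intro h
      have h1 : n - m < s := by omega
      rw [J_top_lt _ s _ h1, sum_eq_single (n - m)]
      · simp [pow_mul]
        norm_num [mul_comm]
      · intro k _ hk
        simp [hk]
      · intro hk
        exact absurd (mem_range.2 h1) hk
    · intro h
      have hsum : ∑ k ∈ range s, lam k * (4 ^ k * ((if k = n - m then (1 : ℝ) else 0) *
          (if k = n - m then 1 else 0))) = 0 := by
        refine sum_eq_zero fun k hk => ?_
        have := mem_range.1 hk
        rw [if_neg (by omega)]; simp
      have ea : (s : ℝ) + 2 * m + β + d - 1 = 2 * m + β + d - 1 + s := by ring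
      rw [hsum, add_zero, J_top_ge _ s _ hs h, int_weight d hd s m β _ rfl,
        jacobi_norm _ (ha _ rfl), ea, hHat_eq _ (ha _ rfl)]
      have e2 : (2 : ℝ) ^ ((s : ℝ) - β - 2 * m - d) * 2 ^ ((2 * m + β + d - 1 + s : ℝ) + 1) =
          4 ^ s := by
        rw [← Real.rpow_add (by norm_num), show (4 : ℝ) = 2 ^ (2 : ℕ) by norm_num, ← pow_mul,
          ← Real.rpow_natCast]
        congr 1
        push_cast; ring
      rw [← e2]
      ring

end
end

section
/- Let d ≥ 2, let s be a positive integer, β > −d−s, λ_0,…,λ_{s−1} > 0, and assume given the orthonormal spanning families (Y_ℓ^m) of solid harmonics. Let η : ℝ → ℝ be a C^∞ function with η(u) = 1 for u ∈ [0,1] and η(u) = 0 for u ≥ 2, and for n ≥ 1 define Q_{n,η}^{(β,−s)} f := Σ_{k=0}^{2n} η(k/n) proj_k^{β,−s} f. Then for every s-times continuously differentiable f : ℝ^d × ℝ → ℝ, every x ∈ ℝ^d and every t ∈ [0,1]: f(x,t) − Q_{n,η}^{(β,−s)} f(x,t) = Σ_{m=0}^{s−1} ((t−1)^m/m!) ·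 [∂_t^m f(x,1) − Σ_{k=0}^{2n} η(k/n) Proj_{k−m}[∂_t^m f(·,1)](x)] + (−1)^s ∫_t^1 ((v−t)^{s−1}/(s−1)!) · [∂_t^s f(x,v) − Σ_{k=0}^{2n} η(k/n) proj_{k−s}^{β+s,0}(∂_t^s f)(x,v)] dv, where ∂_t^m f(·,1) denotes the function ξ ↦ ∂_t^m f(ξ,1) on S^{d−1}, and Proj and proj with negative degree index are 0. -/
open MeasureTheory Finset

noncomputable section

theorem aux_taylor (r : ℕ) (F : ℝ → ℝ) (hF : ContDiff ℝ (r + 1 : ℕ) F) (t : ℝ) :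
    F t = (∑ m ∈ Finset.range (r + 1), (t - 1) ^ m / (m.factorial : ℝ) * iteratedDeriv m F 1)
      + (-1 : ℝ) ^ (r + 1) * ∫ v in t..(1 : ℝ), (v - t) ^ r / (r.factorial : ℝ) *
          iteratedDeriv (r + 1) F v := by
  rcases eq_or_ne (1 : ℝ) t with rfl | hne
  · rw [Finset.sum_range_succ']
    simp
  have hu : UniqueDiffOn ℝ (Set.uIcc 1 t) := uniqueDiffOn_uIcc hne
  have h := taylor_integral_remainder (f := F) (x := t) (x₀ := 1) (n := r) hF.contDiffOn
  rw [taylor_within_apply] at h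
  have h1 : ∀ m ∈ Finset.range (r + 1),
      (((m.factorial : ℝ))⁻¹ * (t - 1) ^ m) • iteratedDerivWithin m F (Set.uIcc 1 t) 1
        = (t - 1) ^ m / (m.factorial : ℝ) * iteratedDeriv m F 1 := by
    intro m hm
    rw [iteratedDerivWithin_eq_iteratedDeriv hu
      ((hF.of_le (by norm_cast; have := Finset.mem_range.1 hm; omega)).contDiffAt) Set.left_mem_uIcc]
    simp only [smul_eq_mul]; ring
  rw [Finset.sum_congr rfl h1] at h
  have h2 : (∫ v in (1 : ℝ)..t, ((t - v) ^ r / (r.factorial : ℝ)) •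
      iteratedDerivWithin (r + 1) F (Set.uIcc 1 t) v)
      = (-1 : ℝ) ^ (r + 1) * ∫ v in t..(1 : ℝ), (v - t) ^ r / (r.factorial : ℝ) *
          iteratedDeriv (r + 1) F v := by
    rw [intervalIntegral.integral_symm, pow_succ, mul_assoc, neg_one_mul, mul_neg,
      ← intervalIntegral.integral_const_mul]
    congr 1
    refine intervalIntegral.integral_congr fun v hv => ?_
    rw [Set.uIcc_comm] at hv
    simp only [smul_eq_mul]
    rw [iteratedDerivWithin_eq_iteratedDeriv hu hF.contDiffAt hv,
      show t - v = -1 * (v - t) by ring, mul_pow]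
    ring
  rw [h2] at h
  linarith

/-- Primitive vanishing at `1`. -/
def auxI (p : ℝ → ℝ) : ℝ → ℝ := fun t => ∫ v in (1 : ℝ)..t, p v

theorem aux_deriv_I (p : ℝ → ℝ) (hp : Continuous p) : deriv (auxI p) = p := by
  funext t
  exact hp.deriv_integral p 1 t

theorem aux_contDiff_I (p : ℝ → ℝ) (hp : Continuous p) (s : ℕ) : ContDiff ℝ s (auxI^[s] p) := by
  induction s with
  | zero => simpa using hp
  | succ s ih =>
    rw [Function.iterate_succ_apply', Nat.cast_succ, contDiff_succ_iff_deriv]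
    refine ⟨fun t => ?_, by simp, ?_⟩
    · exact (intervalIntegral.integral_hasDerivAt_right
        (ih.continuous.intervalIntegrable _ _)
        (ih.continuous.stronglyMeasurableAtFilter _ _) ih.continuous.continuousAt).differentiableAt
    · rw [aux_deriv_I _ ih.continuous]; exact ih

theorem aux_iter_I (p : ℝ → ℝ) (hp : Continuous p) (i j : ℕ) :
    iteratedDeriv i (auxI^[i + j] p) = auxI^[j] p := by
  induction i with
  | zero => simp
  | succ i ih =>
    rw [iteratedDeriv_succ', show i + 1 + j = (i + j) + 1 by omega, Function.iterate_succ_apply',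
      aux_deriv_I _ (aux_contDiff_I p hp _).continuous, ih]

theorem aux_iter_I_one (p : ℝ → ℝ) (hp : Continuous p) (i s : ℕ) (h : i < s) :
    iteratedDeriv i (auxI^[s] p) 1 = 0 := by
  obtain ⟨j, rfl⟩ := Nat.exists_eq_add_of_lt h
  rw [add_assoc, aux_iter_I p hp i (j + 1), Function.iterate_succ_apply']
  simp [auxI]

theorem aux_I_eq (p : ℝ → ℝ) (hp : Continuous p) (r : ℕ) (t : ℝ) :
    auxI^[r + 1] p t = (-1 : ℝ) ^ (r + 1) * ∫ v in t..(1 : ℝ),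
      (v - t) ^ r / (r.factorial : ℝ) * p v := by
  rw [aux_taylor r _ (aux_contDiff_I p hp (r + 1)) t, Finset.sum_eq_zero]
  · have := aux_iter_I p hp (r + 1) 0
    simp only [add_zero, Function.iterate_zero, id] at this
    rw [this, zero_add]
  · intro m hm
    rw [aux_iter_I_one p hp m _ (Finset.mem_range.1 hm), mul_zero]

theorem aux_jacobiP_cont (a b : ℝ) (n : ℕ) : Continuous (jacobiP a b n) := by
  unfold jacobiP
  fun_prop

theorem aux_J_high (a : ℝ) (r n : ℕ) (h : ¬ n < r + 1) (t : ℝ) :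
    jacobiJneg a (r + 1) n (1 - 2 * t) =
      2 ^ (r + 1) * jacobiA (a + (r + 1 : ℕ)) 0 (n - (r + 1)) * ∫ v in t..(1 : ℝ),
        (v - t) ^ r / (r.factorial : ℝ) * jacobiP (a + (r + 1 : ℕ)) 0 (n - (r + 1)) (1 - 2 * v) := by
  unfold jacobiJneg jacobiJ
  rw [if_neg h]
  have := intervalIntegral.mul_integral_comp_sub_mul (a := t) (b := 1)
    (f := fun u => (1 - 2 * t - u) ^ r / (r.factorial : ℝ) *
      jacobiPhat (a + (r + 1 : ℕ)) 0 (n - (r + 1)) u) (c := 2) (d := 1)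
  rw [show (1 : ℝ) - 2 * 1 = -1 by norm_num] at this
  simp only [Nat.add_sub_cancel]
  rw [← this, ← intervalIntegral.integral_const_mul, ← intervalIntegral.integral_const_mul]
  refine intervalIntegral.integral_congr fun v _ => ?_
  simp only [jacobiPhat]
  rw [show 1 - 2 * t - (1 - 2 * v) = 2 * (v - t) by ring, mul_pow, pow_succ]
  ring

theorem aux_J_high' (a : ℝ) (r n : ℕ) (h : ¬ n < r + 1) (t : ℝ) :
    jacobiJneg a (r + 1) n (1 - 2 * t) =
      ((-2) ^ (r + 1) * jacobiA (a + (r + 1 : ℕ)) 0 (n - (r + 1))) * auxI^[r + 1] (fun v =>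
        jacobiP (a + (r + 1 : ℕ)) 0 (n - (r + 1)) (1 - 2 * v)) t := by
  rw [aux_J_high a r n h, aux_I_eq _ (by have := aux_jacobiP_cont; fun_prop),
    show (-2 : ℝ) = (-1) * 2 by norm_num, mul_pow]
  have : ((-1 : ℝ) ^ (r + 1)) * (-1) ^ (r + 1) = 1 := by
    rw [← mul_pow]; norm_num
  linear_combination (-(2 ^ (r + 1) * jacobiA (a + (r + 1 : ℕ)) 0 (n - (r + 1)) * ∫ v in t..(1 : ℝ),
        (v - t) ^ r / (r.factorial : ℝ) *
          jacobiP (a + (r + 1 : ℕ)) 0 (n - (r + 1)) (1 - 2 * v))) * this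

theorem aux_J_low (a : ℝ) (s n : ℕ) (h : n < s) (t : ℝ) :
    jacobiJneg a s n (1 - 2 * t) = ((-2) ^ n / (n.factorial : ℝ)) * (t - 1) ^ n := by
  unfold jacobiJneg jacobiJ
  rw [if_pos h, show 1 + (1 - 2 * t) = (-2) * (t - 1) by ring, mul_pow]
  ring

theorem aux_iter_pow (i j : ℕ) (c t : ℝ) :
    iteratedDeriv i (fun τ => c * (τ - 1) ^ j) t = c * (j.descFactorial i * (t - 1) ^ (j - i)) := by
  rw [iteratedDeriv_const_mul_field]
  have := congrFun (iteratedDeriv_comp_sub_const i (fun x : ℝ => x ^ j) 1) t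
  rw [this]
  simp [iteratedDeriv_pow]

theorem aux_term_low (d : ℕ) (s : ℕ) (β : ℝ) (lam : ℕ → ℝ) (hlam : ∀ k, k ≤ s - 1 → 0 < lam k)
    (Y : Euc d → ℝ) (n m : ℕ) (h : n - m < s) (f : Euc d × ℝ → ℝ) (x : Euc d) (t : ℝ) :
    coneSobInner d β s lam f (coneSS d β s n m Y) / coneSobH d β s lam n m *
      coneSS d β s n m Y (x, t) =
    (t - 1) ^ (n - m) / ((n - m).factorial : ℝ) *
      ((1 / omegaS d) * sphInt d (fun ξ => pdT (n - m) f (ξ, 1) * Y ξ) * Y x) := by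
  have hpd : ∀ (i : ℕ) (p : Euc d × ℝ), pdT i (coneSS d β s n m Y) p =
      (-2) ^ (n - m) / ((n - m).factorial : ℝ) * Y p.1 *
        ((n - m).descFactorial i * (p.2 - 1) ^ (n - m - i)) := by
    intro i p
    unfold pdT
    rw [← aux_iter_pow]
    congr 1
    funext τ
    simp only [coneSS, aux_J_low _ _ _ h]
    ring
  have hl : 0 < lam (n - m) := hlam _ (by omega)
  have hfac : ((n - m).factorial : ℝ) ≠ 0 := by positivity
  have hin : coneSobInner d β s lam f (coneSS d β s n m Y) =
      lam (n - m) / omegaS d * ((-2) ^ (n - m) *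
        sphInt d (fun ξ => pdT (n - m) f (ξ, 1) * Y ξ)) := by
    unfold coneSobInner
    have h0 : coneInt d (fun p => pdT s f p * pdT s (coneSS d β s n m Y) p * p.2 ^ (β + s)) = 0 := by
      simp only [hpd, Nat.descFactorial_of_lt h]
      simp [coneInt, sphInt]
    rw [h0, mul_zero, zero_add, Finset.sum_eq_single (n - m)]
    · congr 1
      unfold sphInt
      rw [← integral_const_mul]
      congr 1
      funext ξ
      simp only [hpd, Nat.descFactorial_self, Nat.sub_self, pow_zero, mul_one]
      field_simp
    · intro i hi hne
      rcases lt_or_gt_of_ne hne with h1 | h1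
      · have : (0 : ℝ) ^ (n - m - i) = 0 := zero_pow (by omega)
        simp [hpd, sphInt, this]
      · simp [hpd, sphInt, Nat.descFactorial_of_lt h1]
    · intro hh
      exact absurd (Finset.mem_range.2 h) hh
  have hSS : coneSS d β s n m Y (x, t) =
      (-2) ^ (n - m) / ((n - m).factorial : ℝ) * (t - 1) ^ (n - m) * Y x := by
    simp only [coneSS, aux_J_low _ _ _ h]
  have hH : coneSobH d β s lam n m = (-2) ^ (n - m) * (-2) ^ (n - m) * lam (n - m) := by
    unfold coneSobH
    rw [if_pos h, pow_mul, ← mul_pow]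
    norm_num
  have h2 : ((-2 : ℝ)) ^ (n - m) ≠ 0 := by positivity
  rw [hin, hSS, hH]
  generalize (-2 : ℝ) ^ (n - m) = z at *
  by_cases hω : omegaS d = 0
  · simp [hω]
  · field_simp

theorem aux_poch_pos (x : ℝ) (hx : 0 < x) (k : ℕ) : 0 < poch x k := ascPochhammer_pos k x hx

theorem aux_poch_ratio (b : ℝ) (k : ℕ) : poch b k * (b + k) = b * poch (b + 1) k := by
  unfold poch
  induction k with
  | zero => simp
  | succ k ih =>
    rw [ascPochhammer_succ_eval, ascPochhammer_succ_eval]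
    push_cast
    linear_combination (b + (k + 1)) * ih

theorem aux_cconst (b : ℝ) (hb : 0 < b + 1) : cconst b 0 = b + 1 := by
  unfold cconst
  rw [show b + 0 + 2 = (b + 1) + 1 by ring, Real.Gamma_add_one hb.ne']
  have := Real.Gamma_pos_of_pos hb
  simp
  field_simp

theorem aux_term_high (d : ℕ) (r : ℕ) (β : ℝ) (hβ : 0 < β + (r + 1 : ℕ) + d) (lam : ℕ → ℝ)
    (Y : Euc d → ℝ) (n m : ℕ) (h : ¬ n - m < r + 1) (f : Euc d × ℝ → ℝ) (x : Euc d) (t : ℝ) :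
    coneSobInner d β (r + 1) lam f (coneSS d β (r + 1) n m Y) / coneSobH d β (r + 1) lam n m *
      coneSS d β (r + 1) n m Y (x, t) =
    (-1 : ℝ) ^ (r + 1) * ∫ v in t..(1 : ℝ), (v - t) ^ r / (r.factorial : ℝ) *
      (coneInner d (β + (r + 1 : ℕ)) 0 (pdT (r + 1) f)
        (coneS d (β + (r + 1 : ℕ)) 0 (n - (r + 1)) m Y) /
        coneH d (β + (r + 1 : ℕ)) 0 (n - (r + 1)) m *
          coneS d (β + (r + 1 : ℕ)) 0 (n - (r + 1)) m Y (x, v)) := by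
  have hnm : n - m - (r + 1) = n - (r + 1) - m := by omega
  set a : ℝ := 2 * m + (β + (r + 1 : ℕ)) + d - 1 with ha
  have ha1 : 2 * (m : ℝ) + β + d - 1 + (r + 1 : ℕ) = a := by rw [ha]; ring
  have ha2 : ((r + 1 : ℕ) : ℝ) + 2 * m + β + d - 1 = a := by rw [ha]; ring
  set P : ℝ → ℝ := fun v => jacobiP a 0 (n - (r + 1) - m) (1 - 2 * v) with hP
  have hPc : Continuous P := by have := aux_jacobiP_cont; rw [hP]; fun_prop
  set A := jacobiA a 0 (n - (r + 1) - m) with hA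
  have hA0 : A ≠ 0 := by
    rw [hA]
    have hpos : 0 < ((n - (r + 1) - m : ℕ) : ℝ) + a + 0 + 1 := by
      have h1 : (0 : ℝ) ≤ ((n - (r + 1) - m : ℕ) : ℝ) := Nat.cast_nonneg _
      have h2 : (0 : ℝ) ≤ (m : ℝ) := Nat.cast_nonneg _
      rw [ha]; linarith
    exact div_ne_zero (by positivity) (aux_poch_pos _ hpos _).ne'
  have hSSf : ∀ (y : Euc d) (τ : ℝ), coneSS d β (r + 1) n m Y (y, τ) =
      ((-2) ^ (r + 1) * A * Y y) * auxI^[r + 1] P τ := by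
    intro y τ
    simp only [coneSS]
    rw [aux_J_high' _ _ _ h, hnm, ha1]
    ring
  have hpd : ∀ (i : ℕ) (p : Euc d × ℝ), pdT i (coneSS d β (r + 1) n m Y) p =
      ((-2) ^ (r + 1) * A * Y p.1) * iteratedDeriv i (auxI^[r + 1] P) p.2 := by
    intro i p
    unfold pdT
    rw [← iteratedDeriv_const_mul_field]
    congr 1
    funext τ
    exact hSSf _ _
  have hpdtop : ∀ p : Euc d × ℝ, pdT (r + 1) (coneSS d β (r + 1) n m Y) p =
      ((-2) ^ (r + 1) * A) * coneS d (β + (r + 1 : ℕ)) 0 (n - (r + 1)) m Y p := by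
    intro p
    have := aux_iter_I P hPc (r + 1) 0
    simp only [add_zero, Function.iterate_zero, id] at this
    rw [hpd, this]
    simp only [coneS, hP]
    ring
  set C := coneInt d (fun p => pdT (r + 1) f p *
    coneS d (β + (r + 1 : ℕ)) 0 (n - (r + 1)) m Y p * p.2 ^ (β + (r + 1 : ℕ))) with hC
  have hin : coneSobInner d β (r + 1) lam f (coneSS d β (r + 1) n m Y) =
      (1 / omegaS d) * (((-2) ^ (r + 1) * A) * C) := by
    unfold coneSobInner
    rw [Finset.sum_eq_zero, add_zero]
    · congr 1
      rw [hC]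
      unfold coneInt sphInt
      rw [← intervalIntegral.integral_const_mul]
      congr 1
      funext τ
      rw [mul_left_comm, ← integral_const_mul, ← integral_const_mul, ← integral_const_mul]
      congr 1
      funext ξ
      simp only [hpdtop]
      ring
    · intro i hi
      simp only [hpd, aux_iter_I_one P hPc i _ (Finset.mem_range.1 hi)]
      simp [sphInt]
  have hin2 : coneInner d (β + (r + 1 : ℕ)) 0 (pdT (r + 1) f)
        (coneS d (β + (r + 1 : ℕ)) 0 (n - (r + 1)) m Y) =
      (β + (r + 1 : ℕ) + d) / omegaS d * C := by
    unfold coneInner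
    rw [aux_cconst _ (by linarith), hC]
    simp only [Real.rpow_zero, mul_one]
    congr 2
    ring
  have hb2 : 0 < β + (r + 1 : ℕ) + d + (2 * m : ℕ) := by positivity
  have hH2 : coneH d (β + (r + 1 : ℕ)) 0 (n - (r + 1)) m =
      (β + (r + 1 : ℕ) + d) / (β + (r + 1 : ℕ) + d + (2 * m : ℕ)) *
        hJac a 0 (n - (r + 1) - m) := by
    unfold coneH
    congr 1
    have hr := aux_poch_ratio (β + (r + 1 : ℕ) + d) (2 * m)
    have hp := aux_poch_pos (β + (r + 1 : ℕ) + d + 1) (by linarith) (2 * m)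
    rw [add_zero, div_eq_div_iff hp.ne' hb2.ne', hr]
  have hH : coneSobH d β (r + 1) lam n m =
      2 ^ (r + 1) * 2 ^ (r + 1) / (β + (r + 1 : ℕ) + d + (2 * m : ℕ)) * A ^ 2 *
        hJac a 0 (n - (r + 1) - m) := by
    unfold coneSobH hHat
    have ha3 : a + 1 = β + (r + 1 : ℕ) + d + (2 * m : ℕ) := by rw [ha]; push_cast; ring
    rw [if_neg h, ha2, hnm, ← hA, aux_cconst a (by rw [ha3]; exact hb2), ha3]
    have h2 : (2 : ℝ) ^ (((r + 1 : ℕ) : ℝ) - β - 2 * m - d) * 2 ^ (a + 0 + 1) =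
        2 ^ (r + 1) * 2 ^ (r + 1) := by
      rw [← Real.rpow_add (by norm_num), ← pow_add, ← Real.rpow_natCast]
      congr 1
      rw [ha]; push_cast; ring
    rw [← h2]
    ring
  have hSS : coneSS d β (r + 1) n m Y (x, t) =
      2 ^ (r + 1) * A * (∫ v in t..(1 : ℝ), (v - t) ^ r / (r.factorial : ℝ) * P v) * Y x := by
    simp only [coneSS]
    rw [aux_J_high _ _ _ h, hnm, ha1]
  have hR : ∀ K : ℝ, (∫ v in t..(1 : ℝ), (v - t) ^ r / (r.factorial : ℝ) *
      (K * coneS d (β + (r + 1 : ℕ)) 0 (n - (r + 1)) m Y (x, v))) =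
      K * Y x * ∫ v in t..(1 : ℝ), (v - t) ^ r / (r.factorial : ℝ) * P v := by
    intro K
    rw [← intervalIntegral.integral_const_mul]
    congr 1
    funext v
    simp only [coneS, hP]
    ring
  rw [hR, hin, hin2, hH, hH2, hSS, show (-2 : ℝ) = (-1) * 2 by norm_num, mul_pow]
  have hz : (2 : ℝ) ^ (r + 1) ≠ 0 := by positivity
  generalize (2 : ℝ) ^ (r + 1) = z at *
  generalize (-1 : ℝ) ^ (r + 1) = w at *
  generalize (∫ v in t..(1 : ℝ), (v - t) ^ r / (r.factorial : ℝ) * P v) = I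
  generalize β + (r + 1 : ℕ) + d = B at *
  generalize B + (2 * m : ℕ) = D at *
  generalize hJac a 0 (n - (r + 1) - m) = H
  by_cases hω : omegaS d = 0
  · simp [hω]
  by_cases hH0 : H = 0
  · simp [hH0]
  have := hβ.ne'
  have := hb2.ne'
  field_simp

theorem aux_coneS_cont (d : ℕ) (β : ℝ) (n m : ℕ) (Y : Euc d → ℝ) (x : Euc d) :
    Continuous (fun v : ℝ => coneS d β 0 n m Y (x, v)) := by
  have := aux_jacobiP_cont
  simp only [coneS]
  fun_prop

theorem aux_coneProj_cont (d : ℕ) (N : ℕ → ℕ) (Y : (m : ℕ) → Fin (N m) → Euc d → ℝ) (β : ℝ)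
    (n : ℕ) (f : Euc d × ℝ → ℝ) (x : Euc d) :
    Continuous (fun v : ℝ => coneProj d N Y β 0 n f (x, v)) := by
  unfold coneProj
  refine continuous_finsetSum _ fun m _ => continuous_finsetSum _ fun l _ => ?_
  exact continuous_const.mul (aux_coneS_cont _ _ _ _ _ _)

theorem aux_proj (d : ℕ) (r : ℕ) (β : ℝ) (hβ : 0 < β + (r + 1 : ℕ) + d) (lam : ℕ → ℝ)
    (hlam : ∀ k, k ≤ r + 1 - 1 → 0 < lam k)
    (N : ℕ → ℕ) (Y : (m : ℕ) → Fin (N m) → Euc d → ℝ) (k : ℕ)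
    (f : Euc d × ℝ → ℝ) (x : Euc d) (t : ℝ) :
    coneSobProj d N Y β (r + 1) lam k f (x, t) =
      (∑ m ∈ Finset.range (r + 1), (t - 1) ^ m / (m.factorial : ℝ) *
        (if k < m then 0 else sphProj d N Y (k - m) (fun ξ => pdT m f (ξ, 1)) x)) +
      (-1 : ℝ) ^ (r + 1) * ∫ v in t..(1 : ℝ), (v - t) ^ r / (r.factorial : ℝ) *
        (if k < r + 1 then 0
          else coneProj d N Y (β + (r + 1 : ℕ)) 0 (k - (r + 1)) (pdT (r + 1) f) (x, v)) := by
  have hlow : ∀ j, j < r + 1 → j ≤ k → (∑ ℓ : Fin (N (k - j)),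
      coneSobInner d β (r + 1) lam f (coneSS d β (r + 1) k (k - j) (Y (k - j) ℓ)) /
        coneSobH d β (r + 1) lam k (k - j) * coneSS d β (r + 1) k (k - j) (Y (k - j) ℓ) (x, t)) =
      (t - 1) ^ j / (j.factorial : ℝ) *
        (if k < j then 0 else sphProj d N Y (k - j) (fun ξ => pdT j f (ξ, 1)) x) := by
    intro j hj hjk
    have hkj : k - (k - j) = j := by omega
    rw [if_neg (by omega)]
    unfold sphProj
    rw [Finset.mul_sum]
    refine Finset.sum_congr rfl fun l _ => ?_
    rw [aux_term_low d (r + 1) β lam hlam _ _ _ (by omega), hkj]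
  unfold coneSobProj
  by_cases hk : k < r + 1
  · simp only [if_pos hk, mul_zero, intervalIntegral.integral_zero, add_zero]
    rw [← Finset.sum_range_reflect]
    rw [← Finset.sum_subset (Finset.range_mono (show k + 1 ≤ r + 1 by omega))]
    · refine Finset.sum_congr rfl fun j hj => ?_
      have := Finset.mem_range.1 hj
      rw [Nat.add_sub_cancel]
      exact hlow j (by omega) (by omega)
    · intro j _ hj
      rw [Finset.mem_range] at hj
      rw [if_pos (by omega), mul_zero]
  · simp only [if_neg hk]
    rw [show k + 1 = (k - (r + 1) + 1) + (r + 1) by omega, Finset.sum_range_add, add_comm]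
    congr 1
    · rw [← Finset.sum_range_reflect]
      refine Finset.sum_congr rfl fun j hj => ?_
      have := Finset.mem_range.1 hj
      rw [show k - (r + 1) + 1 + (r + 1 - 1 - j) = k - j by omega]
      exact hlow j (by omega) (by omega)
    · unfold coneProj
      simp only [Finset.mul_sum]
      have hc : ∀ (m : ℕ) (l : Fin (N m)), Continuous (fun v : ℝ =>
          (v - t) ^ r / (r.factorial : ℝ) *
      (coneInner d (β + (r + 1 : ℕ)) 0 (pdT (r + 1) f)
        (coneS d (β + (r + 1 : ℕ)) 0 (k - (r + 1)) m (Y m l)) /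
        coneH d (β + (r + 1 : ℕ)) 0 (k - (r + 1)) m *
          coneS d (β + (r + 1 : ℕ)) 0 (k - (r + 1)) m (Y m l) (x, v))) := by
        intro m l
        have := aux_coneS_cont d (β + (r + 1 : ℕ)) (k - (r + 1)) m (Y m l) x
        fun_prop
      rw [intervalIntegral.integral_finsetSum fun m _ =>
        (continuous_finsetSum _ fun l _ => hc m l).intervalIntegrable _ _, Finset.mul_sum]
      refine Finset.sum_congr rfl fun m hm => ?_
      have := Finset.mem_range.1 hm
      rw [intervalIntegral.integral_finsetSum fun l _ => (hc m l).intervalIntegrable _ _,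
        Finset.mul_sum]
      refine Finset.sum_congr rfl fun l _ => ?_
      exact aux_term_high d r β hβ lam (Y m l) k m (by omega) f x t

/-- error formula for the near-best approximation operator `Q_{n,η}^{(β,-s)}`. -/
theorem coneSob_Q_error (d : ℕ) (hd : 2 ≤ d) (s : ℕ) (hs : 1 ≤ s) (β : ℝ)
    (hβ : -(d : ℝ) - s < β) (lam : ℕ → ℝ) (hlam : ∀ k, k ≤ s - 1 → 0 < lam k)
    (N : ℕ → ℕ) (Y : (m : ℕ) → Fin (N m) → Euc d → ℝ) (hY : IsONBasisFamily d N Y)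
    (η : ℝ → ℝ) (hη : ContDiff ℝ (⊤ : ℕ∞) η) (hη1 : ∀ u ∈ Set.Icc (0 : ℝ) 1, η u = 1)
    (hη0 : ∀ u : ℝ, 2 ≤ u → η u = 0)
    (n : ℕ) (hn : 1 ≤ n)
    (f : Euc d × ℝ → ℝ) (hf : ContDiff ℝ s f)
    (x : Euc d) (t : ℝ) (ht : t ∈ Set.Icc (0 : ℝ) 1) :
    f (x, t) - (∑ k ∈ Finset.range (2 * n + 1), η ((k : ℝ) / n) *
        coneSobProj d N Y β s lam k f (x, t))
      = (∑ m ∈ Finset.range s, (t - 1) ^ m / (m.factorial : ℝ) *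
          (pdT m f (x, 1)
            - ∑ k ∈ Finset.range (2 * n + 1), η ((k : ℝ) / n) *
                (if k < m then 0
                  else sphProj d N Y (k - m) (fun ξ => pdT m f (ξ, 1)) x)))
        + (-1 : ℝ) ^ s * ∫ v in t..(1 : ℝ), (v - t) ^ (s - 1) / ((s - 1).factorial : ℝ) *
            (pdT s f (x, v)
              - ∑ k ∈ Finset.range (2 * n + 1), η ((k : ℝ) / n) *
                  (if k < s then 0
                    else coneProj d N Y (β + s) 0 (k - s) (pdT s f) (x, v))) := by
  obtain ⟨r, rfl⟩ : ∃ r, s = r + 1 := ⟨s - 1, by omega⟩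
  have hβ' : 0 < β + (r + 1 : ℕ) + d := by linarith
  have hF : ContDiff ℝ (r + 1 : ℕ) (fun τ : ℝ => f (x, τ)) := by fun_prop
  have hT := aux_taylor r _ hF t
  have hc1 : Continuous (fun v : ℝ => pdT (r + 1) f (x, v)) := by
    unfold pdT
    exact hF.continuous_iteratedDeriv' (r + 1)
  have hc2 : ∀ k, Continuous (fun v : ℝ => if k < r + 1 then (0 : ℝ)
      else coneProj d N Y (β + (r + 1 : ℕ)) 0 (k - (r + 1)) (pdT (r + 1) f) (x, v)) := by
    intro k
    split_ifs
    · exact continuous_const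
    · exact aux_coneProj_cont _ _ _ _ _ _ _
  have hsum : (∫ v in t..(1 : ℝ), (v - t) ^ r / (r.factorial : ℝ) *
            (pdT (r + 1) f (x, v)
              - ∑ k ∈ Finset.range (2 * n + 1), η ((k : ℝ) / n) *
                  (if k < r + 1 then 0
                    else coneProj d N Y (β + (r + 1 : ℕ)) 0 (k - (r + 1)) (pdT (r + 1) f) (x, v)))) =
      (∫ v in t..(1 : ℝ), (v - t) ^ r / (r.factorial : ℝ) * pdT (r + 1) f (x, v)) -
        ∑ k ∈ Finset.range (2 * n + 1), η ((k : ℝ) / n) *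
          ∫ v in t..(1 : ℝ), (v - t) ^ r / (r.factorial : ℝ) * (if k < r + 1 then 0
                    else coneProj d N Y (β + (r + 1 : ℕ)) 0 (k - (r + 1)) (pdT (r + 1) f) (x, v)) := by
    simp only [← intervalIntegral.integral_const_mul]
    rw [← intervalIntegral.integral_finsetSum, ← intervalIntegral.integral_sub]
    · congr 1
      funext v
      rw [mul_sub, Finset.mul_sum]
      congr 1
      exact Finset.sum_congr rfl fun k _ => by ring
    · exact Continuous.intervalIntegrable (by fun_prop) _ _
    · exact Continuous.intervalIntegrable (continuous_finsetSum _ fun k _ => by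
        have := hc2 k
        fun_prop) _ _
    · intro k _
      have := hc2 k
      exact Continuous.intervalIntegrable (by fun_prop) _ _
  simp only [Nat.add_sub_cancel]
  rw [hsum]
  simp only [aux_proj d r β hβ' lam hlam N Y]
  simp only [mul_add, mul_sub, Finset.sum_add_distrib, Finset.sum_sub_distrib, Finset.mul_sum]
  rw [Finset.sum_comm]
  have e1 : f (x, t) = (∑ m ∈ Finset.range (r + 1), (t - 1) ^ m / (m.factorial : ℝ) *
      pdT m f (x, 1)) + (-1 : ℝ) ^ (r + 1) * ∫ v in t..(1 : ℝ), (v - t) ^ r / (r.factorial : ℝ) *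
        pdT (r + 1) f (x, v) := hT
  rw [e1]
  simp only [mul_left_comm (η _)]
  ring

end
end
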